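/- arXiv:0707.1475 — 3 statements merged into one kernel-verified Lean document; each statement's English description precedes it below -/
import Mathlib

section
/- Let R_{abcd} have Riemann symmetries on Minkowski space, n^a a unit timelike vector, and define Y_{ac} = R_{abcd} n^b n^d, Z_{ac} = *R_{abcd} n^b n^d, X_{ac} = *R*_{abcd} n^b n^d. Then the orthogonal splitting of the Riemann tensor holds: R_{abcd} = 2 n_c n_{[a} Y_{b]d} + 2 h_{a[d} X_{c]b} + 2 n_d n_{[b} Y_{a]c} + 2 n_{[d} Z^e{}_{c]} ε_{abe} + 2 n_{[b} Z^e{}_{a]} ε_{cde} + h_{bd} (h_{ac} X^e{}_e − X_{ac}) + h_{bc} (X_{ad} − h_{ad} X^e{}_e). -/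
noncomputable section

/-- The Minkowski metric `diag(-1,1,1,1)` on `ℝ⁴`. -/
def gm : Fin 4 → Fin 4 → ℝ := fun a b => if a = b then (if a = 0 then -1 else 1) else 0

/-- The totally antisymmetric volume form with `η₀₁₂₃ = 1`. -/
def eta (a b c d : Fin 4) : ℝ :=
  ((((b.val : ℤ) - a.val).sign * ((c.val : ℤ) - a.val).sign * ((d.val : ℤ) - a.val).sign *
    ((c.val : ℤ) - b.val).sign * ((d.val : ℤ) - b.val).sign * ((d.val : ℤ) - c.val).sign : ℤ) : ℝ)

/-- Index lowering: `n_a = g_{ab} n^b`. -/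
def lo (n : Fin 4 → ℝ) (a : Fin 4) : ℝ := ∑ b, gm a b * n b

/-- Spatial metric `h_{ab} = g_{ab} + n_a n_b`. -/
def hm (n : Fin 4 → ℝ) (a b : Fin 4) : ℝ := gm a b + lo n a * lo n b

/-- Spatial volume form `ε_{abc} = n^d η_{dabc}` of a unit timelike `n`. -/
def eps (n : Fin 4 → ℝ) (a b c : Fin 4) : ℝ := ∑ d, n d * eta d a b c

/-- A rank-4 tensor. -/
abbrev Tensor4 := Fin 4 → Fin 4 → Fin 4 → Fin 4 → ℝ

/-- `R_{abcd}` has the symmetries of a Riemann tensor. -/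
structure RiemannSymm (R : Tensor4) : Prop where
  antisymm₁ : ∀ a b c d, R a b c d = - R b a c d
  antisymm₂ : ∀ a b c d, R a b c d = - R a b d c
  pairSymm : ∀ a b c d, R a b c d = R c d a b
  firstBianchi : ∀ a b c d,
    (1/6 : ℝ) * (R a b c d + R b c a d + R c a b d
      - R b a c d - R a c b d - R c b a d) = 0

/-- Left dual `*R_{abcd} = ½ η_{abpq} R^{pq}{}_{cd}`. -/
def dualL (R : Tensor4) (a b c d : Fin 4) : ℝ :=
  (1/2) * ∑ p, ∑ q, eta a b p q * (∑ r, ∑ s, gm p r * gm q s * R r s c d)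

/-- Right dual `R*_{abcd} = ½ η_{pqcd} R_{ab}{}^{pq}`. -/
def dualR (R : Tensor4) (a b c d : Fin 4) : ℝ :=
  (1/2) * ∑ p, ∑ q, eta p q c d * (∑ r, ∑ s, gm p r * gm q s * R a b r s)

/-- Double dual `*R*_{abcd} = ½ η_{ab}{}^{pq} R*_{pqcd}`. -/
def dualLR (R : Tensor4) : Tensor4 := dualL (dualR R)

/-- `Y_{ac} = R_{abcd} n^b n^d`. -/
def Yt (R : Tensor4) (n : Fin 4 → ℝ) (a c : Fin 4) : ℝ := ∑ b, ∑ d, R a b c d * n b * n d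

/-- `Z_{ac} = *R_{abcd} n^b n^d`. -/
def Zt (R : Tensor4) (n : Fin 4 → ℝ) (a c : Fin 4) : ℝ := ∑ b, ∑ d, dualL R a b c d * n b * n d

/-- `X_{ac} = *R*_{abcd} n^b n^d`. -/
def Xt (R : Tensor4) (n : Fin 4 → ℝ) (a c : Fin 4) : ℝ := ∑ b, ∑ d, dualLR R a b c d * n b * n d


theorem sign_two : Int.sign 2 = 1 := rfl

theorem sign_three : Int.sign 3 = 1 := rfl

theorem lo_eq (n : Fin 4 → ℝ) (a : Fin 4) : lo n a = ![-n 0, n 1, n 2, n 3] a := by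
  fin_cases a <;> simp [lo, gm]

/-- Contraction of two indices with the metric, written out. -/
theorem gm_contract (f : Fin 4 → Fin 4 → ℝ) (p q : Fin 4) :
    (∑ r, ∑ s, gm p r * gm q s * f r s) = gm p p * gm q q * f p q := by
  rw [Finset.sum_eq_single p, Finset.sum_eq_single q]
  · intro b _ hb
    simp [gm, hb.symm]
  · simp
  · intro b _ hb
    simp [gm, hb.symm]
  · simp

theorem eta_swap_last (a b c d : Fin 4) : eta a b d c = - eta a b c d := by
  unfold eta
  norm_cast
  revert a b c d
  decide

theorem eta_swap_first (a b c d : Fin 4) : eta b a c d = - eta a b c d := by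
  unfold eta
  norm_cast
  revert a b c d
  decide

/-- The six independent components of a bivector, as a sum. -/
theorem sum_bivector (u w : Fin 4 → Fin 4 → ℝ) (hu : ∀ p q, u q p = - u p q)
    (hw : ∀ p q, w q p = - w p q) :
    (1/2) * ∑ p, ∑ q, u p q * (gm p p * gm q q * w p q) =
      -(u 0 1 * w 0 1) - u 0 2 * w 0 2 - u 0 3 * w 0 3
        + u 1 2 * w 1 2 + u 1 3 * w 1 3 + u 2 3 * w 2 3 := by
  have h0 : ∀ p, w p p = 0 := fun p => by linarith [hw p p]
  simp only [Fin.sum_univ_four, h0, hu 0 1, hu 0 2, hu 0 3, hu 1 2, hu 1 3, hu 2 3,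
    hw 0 1, hw 0 2, hw 0 3, hw 1 2, hw 1 3, hw 2 3]
  simp [gm]
  ring

theorem dualL_eq (R : Tensor4) (h : ∀ a b c d, R a b c d = - R b a c d) (a b c d : Fin 4) :
    dualL R a b c d =
      -(eta a b 0 1 * R 0 1 c d) - eta a b 0 2 * R 0 2 c d - eta a b 0 3 * R 0 3 c d
        + eta a b 1 2 * R 1 2 c d + eta a b 1 3 * R 1 3 c d + eta a b 2 3 * R 2 3 c d := by
  rw [← sum_bivector (fun p q => eta a b p q) (fun p q => R p q c d)
    (fun p q => eta_swap_last a b p q) (fun p q => h q p c d)]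
  simp only [dualL, gm_contract (fun r s => R r s c d)]

theorem dualR_eq (R : Tensor4) (h : ∀ a b c d, R a b c d = - R a b d c) (a b c d : Fin 4) :
    dualR R a b c d =
      -(eta 0 1 c d * R a b 0 1) - eta 0 2 c d * R a b 0 2 - eta 0 3 c d * R a b 0 3
        + eta 1 2 c d * R a b 1 2 + eta 1 3 c d * R a b 1 3 + eta 2 3 c d * R a b 2 3 := by
  rw [← sum_bivector (fun p q => eta p q c d) (fun p q => R a b p q)
    (fun p q => eta_swap_first p q c d) (fun p q => h a b q p)]
  simp only [dualR, gm_contract (fun r s => R a b r s)]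

theorem dualLR_eq (R : Tensor4) (hR : RiemannSymm R) (a b c d : Fin 4) :
    dualLR R a b c d =
      -(eta a b 0 1 * dualR R 0 1 c d) - eta a b 0 2 * dualR R 0 2 c d
        - eta a b 0 3 * dualR R 0 3 c d + eta a b 1 2 * dualR R 1 2 c d
        + eta a b 1 3 * dualR R 1 3 c d + eta a b 2 3 * dualR R 2 3 c d := by
  unfold dualLR
  apply dualL_eq
  intro a b c d
  rw [dualR_eq R hR.antisymm₂, dualR_eq R hR.antisymm₂]
  simp only [hR.antisymm₁ a b]
  ring

/-- Normal forms of the components of a tensor with Riemann symmetries. -/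
theorem riem_norm (R : Tensor4) (hR : RiemannSymm R) :
    ((∀ a c d, R a a c d = 0) ∧ (∀ a b c, R a b c c = 0)) ∧
    R 0 3 1 2 = R 0 2 1 3 - R 0 1 2 3 := by
  have h1 := hR.antisymm₁
  have h2 := hR.antisymm₂
  refine ⟨⟨fun a c d => by linarith [h1 a a c d], fun a b c => by linarith [h2 a b c c]⟩, ?_⟩
  have hb := hR.firstBianchi 0 1 2 3
  linarith [hR.pairSymm 0 3 1 2, hR.pairSymm 0 2 1 3, h1 1 0 2 3, h1 2 0 1 3, h1 2 1 0 3]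

set_option maxHeartbeats 4000000 in
theorem Yt_table (R : Tensor4) (hR : RiemannSymm R) (n : Fin 4 → ℝ) :
    Yt R n 0 0 = R 0 1 0 1 * n 1 * n 1 + 2 * R 0 1 0 2 * n 1 * n 2 + 2 * R 0 1 0 3 * n 1 * n 3 + R 0 2 0 2 * n 2 * n 2 + 2 * R 0 2 0 3 * n 2 * n 3 + R 0 3 0 3 * n 3 * n 3 ∧
    Yt R n 0 1 = -R 0 1 0 1 * n 0 * n 1 - R 0 1 0 2 * n 0 * n 2 - R 0 1 0 3 * n 0 * n 3 + R 0 1 1 2 * n 1 * n 2 + R 0 1 1 3 * n 1 * n 3 - R 0 1 2 3 * n 2 * n 3 + R 0 2 1 2 * n 2 * n 2 + 2 * R 0 2 1 3 * n 2 * n 3 + R 0 3 1 3 * n 3 * n 3 ∧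
    Yt R n 0 2 = -R 0 1 0 2 * n 0 * n 1 - R 0 1 1 2 * n 1 * n 1 + 2 * R 0 1 2 3 * n 1 * n 3 - R 0 2 0 2 * n 0 * n 2 - R 0 2 0 3 * n 0 * n 3 - R 0 2 1 2 * n 1 * n 2 - R 0 2 1 3 * n 1 * n 3 + R 0 2 2 3 * n 2 * n 3 + R 0 3 2 3 * n 3 * n 3 ∧
    Yt R n 0 3 = -R 0 1 0 3 * n 0 * n 1 - R 0 1 1 3 * n 1 * n 1 - R 0 1 2 3 * n 1 * n 2 - R 0 2 0 3 * n 0 * n 2 - R 0 2 1 3 * n 1 * n 2 - R 0 2 2 3 * n 2 * n 2 - R 0 3 0 3 * n 0 * n 3 - R 0 3 1 3 * n 1 * n 3 - R 0 3 2 3 * n 2 * n 3 ∧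
    Yt R n 1 0 = -R 0 1 0 1 * n 0 * n 1 - R 0 1 0 2 * n 0 * n 2 - R 0 1 0 3 * n 0 * n 3 + R 0 1 1 2 * n 1 * n 2 + R 0 1 1 3 * n 1 * n 3 - R 0 1 2 3 * n 2 * n 3 + R 0 2 1 2 * n 2 * n 2 + 2 * R 0 2 1 3 * n 2 * n 3 + R 0 3 1 3 * n 3 * n 3 ∧
    Yt R n 1 1 = R 0 1 0 1 * n 0 * n 0 - 2 * R 0 1 1 2 * n 0 * n 2 - 2 * R 0 1 1 3 * n 0 * n 3 + R 1 2 1 2 * n 2 * n 2 + 2 * R 1 2 1 3 * n 2 * n 3 + R 1 3 1 3 * n 3 * n 3 ∧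
    Yt R n 1 2 = R 0 1 0 2 * n 0 * n 0 + R 0 1 1 2 * n 0 * n 1 - R 0 1 2 3 * n 0 * n 3 - R 0 2 1 2 * n 0 * n 2 - R 0 2 1 3 * n 0 * n 3 - R 1 2 1 2 * n 1 * n 2 - R 1 2 1 3 * n 1 * n 3 + R 1 2 2 3 * n 2 * n 3 + R 1 3 2 3 * n 3 * n 3 ∧
    Yt R n 1 3 = R 0 1 0 3 * n 0 * n 0 + R 0 1 1 3 * n 0 * n 1 + 2 * R 0 1 2 3 * n 0 * n 2 - R 0 2 1 3 * n 0 * n 2 - R 0 3 1 3 * n 0 * n 3 - R 1 2 1 3 * n 1 * n 2 - R 1 2 2 3 * n 2 * n 2 - R 1 3 1 3 * n 1 * n 3 - R 1 3 2 3 * n 2 * n 3 ∧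
    Yt R n 2 0 = -R 0 1 0 2 * n 0 * n 1 - R 0 1 1 2 * n 1 * n 1 + 2 * R 0 1 2 3 * n 1 * n 3 - R 0 2 0 2 * n 0 * n 2 - R 0 2 0 3 * n 0 * n 3 - R 0 2 1 2 * n 1 * n 2 - R 0 2 1 3 * n 1 * n 3 + R 0 2 2 3 * n 2 * n 3 + R 0 3 2 3 * n 3 * n 3 ∧
    Yt R n 2 1 = R 0 1 0 2 * n 0 * n 0 + R 0 1 1 2 * n 0 * n 1 - R 0 1 2 3 * n 0 * n 3 - R 0 2 1 2 * n 0 * n 2 - R 0 2 1 3 * n 0 * n 3 - R 1 2 1 2 * n 1 * n 2 - R 1 2 1 3 * n 1 * n 3 + R 1 2 2 3 * n 2 * n 3 + R 1 3 2 3 * n 3 * n 3 ∧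
    Yt R n 2 2 = R 0 2 0 2 * n 0 * n 0 + 2 * R 0 2 1 2 * n 0 * n 1 - 2 * R 0 2 2 3 * n 0 * n 3 + R 1 2 1 2 * n 1 * n 1 - 2 * R 1 2 2 3 * n 1 * n 3 + R 2 3 2 3 * n 3 * n 3 ∧
    Yt R n 2 3 = -R 0 1 2 3 * n 0 * n 1 + R 0 2 0 3 * n 0 * n 0 + 2 * R 0 2 1 3 * n 0 * n 1 + R 0 2 2 3 * n 0 * n 2 - R 0 3 2 3 * n 0 * n 3 + R 1 2 1 3 * n 1 * n 1 + R 1 2 2 3 * n 1 * n 2 - R 1 3 2 3 * n 1 * n 3 - R 2 3 2 3 * n 2 * n 3 ∧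
    Yt R n 3 0 = -R 0 1 0 3 * n 0 * n 1 - R 0 1 1 3 * n 1 * n 1 - R 0 1 2 3 * n 1 * n 2 - R 0 2 0 3 * n 0 * n 2 - R 0 2 1 3 * n 1 * n 2 - R 0 2 2 3 * n 2 * n 2 - R 0 3 0 3 * n 0 * n 3 - R 0 3 1 3 * n 1 * n 3 - R 0 3 2 3 * n 2 * n 3 ∧
    Yt R n 3 1 = R 0 1 0 3 * n 0 * n 0 + R 0 1 1 3 * n 0 * n 1 + 2 * R 0 1 2 3 * n 0 * n 2 - R 0 2 1 3 * n 0 * n 2 - R 0 3 1 3 * n 0 * n 3 - R 1 2 1 3 * n 1 * n 2 - R 1 2 2 3 * n 2 * n 2 - R 1 3 1 3 * n 1 * n 3 - R 1 3 2 3 * n 2 * n 3 ∧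
    Yt R n 3 2 = -R 0 1 2 3 * n 0 * n 1 + R 0 2 0 3 * n 0 * n 0 + 2 * R 0 2 1 3 * n 0 * n 1 + R 0 2 2 3 * n 0 * n 2 - R 0 3 2 3 * n 0 * n 3 + R 1 2 1 3 * n 1 * n 1 + R 1 2 2 3 * n 1 * n 2 - R 1 3 2 3 * n 1 * n 3 - R 2 3 2 3 * n 2 * n 3 ∧
    Yt R n 3 3 = R 0 3 0 3 * n 0 * n 0 + 2 * R 0 3 1 3 * n 0 * n 1 + 2 * R 0 3 2 3 * n 0 * n 2 + R 1 3 1 3 * n 1 * n 1 + 2 * R 1 3 2 3 * n 1 * n 2 + R 2 3 2 3 * n 2 * n 2 := by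
  obtain ⟨⟨hz1, hz2⟩, hb⟩ := riem_norm R hR
  have h1 := hR.antisymm₁
  have h2 := hR.antisymm₂
  have hp := hR.pairSymm
  refine ⟨?_, ?_, ?_, ?_, ?_, ?_, ?_, ?_, ?_, ?_, ?_, ?_, ?_, ?_, ?_, ?_⟩ <;>
  simp only [Yt, Fin.sum_univ_four, hz1, hz2, hb, h1 1 0, h1 2 0, h1 3 0, h1 2 1, h1 3 1, h1 3 2,
    h2 _ _ 1 0, h2 _ _ 2 0, h2 _ _ 3 0, h2 _ _ 2 1, h2 _ _ 3 1, h2 _ _ 3 2,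
    hp 0 2 0 1, hp 0 3 0 1, hp 1 2 0 1, hp 1 3 0 1, hp 2 3 0 1, hp 0 3 0 2, hp 1 2 0 2,
    hp 1 3 0 2, hp 2 3 0 2, hp 1 2 0 3, hp 1 3 0 3, hp 2 3 0 3, hp 1 3 1 2, hp 2 3 1 2, hp 2 3 1 3] <;> ring

set_option maxHeartbeats 4000000 in
theorem Zt_table (R : Tensor4) (hR : RiemannSymm R) (n : Fin 4 → ℝ) :
    Zt R n 0 0 = R 0 1 1 2 * n 1 * n 3 - R 0 1 1 3 * n 1 * n 2 + R 0 1 2 3 * n 1 * n 1 - R 0 1 2 3 * n 3 * n 3 + R 0 2 1 2 * n 2 * n 3 - R 0 2 1 3 * n 2 * n 2 + R 0 2 1 3 * n 3 * n 3 + R 0 2 2 3 * n 1 * n 2 - R 0 3 1 3 * n 2 * n 3 + R 0 3 2 3 * n 1 * n 3 ∧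
    Zt R n 0 1 = -R 0 1 1 2 * n 0 * n 3 + R 0 1 1 3 * n 0 * n 2 - R 0 1 2 3 * n 0 * n 1 + R 1 2 1 2 * n 2 * n 3 - R 1 2 1 3 * n 2 * n 2 + R 1 2 1 3 * n 3 * n 3 + R 1 2 2 3 * n 1 * n 2 - R 1 3 1 3 * n 2 * n 3 + R 1 3 2 3 * n 1 * n 3 ∧
    Zt R n 0 2 = -R 0 2 1 2 * n 0 * n 3 + R 0 2 1 3 * n 0 * n 2 - R 0 2 2 3 * n 0 * n 1 - R 1 2 1 2 * n 1 * n 3 + R 1 2 1 3 * n 1 * n 2 - R 1 2 2 3 * n 1 * n 1 + R 1 2 2 3 * n 3 * n 3 - R 1 3 2 3 * n 2 * n 3 + R 2 3 2 3 * n 1 * n 3 ∧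
    Zt R n 0 3 = R 0 1 2 3 * n 0 * n 3 - R 0 2 1 3 * n 0 * n 3 + R 0 3 1 3 * n 0 * n 2 - R 0 3 2 3 * n 0 * n 1 - R 1 2 1 3 * n 1 * n 3 - R 1 2 2 3 * n 2 * n 3 + R 1 3 1 3 * n 1 * n 2 - R 1 3 2 3 * n 1 * n 1 + R 1 3 2 3 * n 2 * n 2 - R 2 3 2 3 * n 1 * n 2 ∧
    Zt R n 1 0 = R 0 1 0 2 * n 1 * n 3 - R 0 1 0 3 * n 1 * n 2 - R 0 1 2 3 * n 0 * n 1 + R 0 2 0 2 * n 2 * n 3 - R 0 2 0 3 * n 2 * n 2 + R 0 2 0 3 * n 3 * n 3 - R 0 2 2 3 * n 0 * n 2 - R 0 3 0 3 * n 2 * n 3 - R 0 3 2 3 * n 0 * n 3 ∧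
    Zt R n 1 1 = -R 0 1 0 2 * n 0 * n 3 + R 0 1 0 3 * n 0 * n 2 + R 0 1 2 3 * n 0 * n 0 + R 0 1 2 3 * n 2 * n 2 + R 0 2 1 2 * n 2 * n 3 - R 0 2 1 3 * n 2 * n 2 + R 0 2 1 3 * n 3 * n 3 - R 0 3 1 3 * n 2 * n 3 - R 1 2 2 3 * n 0 * n 2 - R 1 3 2 3 * n 0 * n 3 ∧
    Zt R n 1 2 = -R 0 1 2 3 * n 1 * n 2 - R 0 2 0 2 * n 0 * n 3 + R 0 2 0 3 * n 0 * n 2 - R 0 2 1 2 * n 1 * n 3 + R 0 2 1 3 * n 1 * n 2 + R 0 2 2 3 * n 0 * n 0 + R 0 2 2 3 * n 3 * n 3 - R 0 3 2 3 * n 2 * n 3 + R 1 2 2 3 * n 0 * n 1 - R 2 3 2 3 * n 0 * n 3 ∧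
    Zt R n 1 3 = -R 0 2 0 3 * n 0 * n 3 - R 0 2 1 3 * n 1 * n 3 - R 0 2 2 3 * n 2 * n 3 + R 0 3 0 3 * n 0 * n 2 + R 0 3 1 3 * n 1 * n 2 + R 0 3 2 3 * n 0 * n 0 + R 0 3 2 3 * n 2 * n 2 + R 1 3 2 3 * n 0 * n 1 + R 2 3 2 3 * n 0 * n 2 ∧
    Zt R n 2 0 = -R 0 1 0 1 * n 1 * n 3 - R 0 1 0 2 * n 2 * n 3 + R 0 1 0 3 * n 1 * n 1 - R 0 1 0 3 * n 3 * n 3 + R 0 1 1 3 * n 0 * n 1 + R 0 2 0 3 * n 1 * n 2 + R 0 2 1 3 * n 0 * n 2 + R 0 3 0 3 * n 1 * n 3 + R 0 3 1 3 * n 0 * n 3 ∧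
    Zt R n 2 1 = R 0 1 0 1 * n 0 * n 3 - R 0 1 0 3 * n 0 * n 1 - R 0 1 1 2 * n 2 * n 3 - R 0 1 1 3 * n 0 * n 0 - R 0 1 1 3 * n 3 * n 3 - R 0 1 2 3 * n 1 * n 2 + R 0 2 1 3 * n 1 * n 2 + R 0 3 1 3 * n 1 * n 3 + R 1 2 1 3 * n 0 * n 2 + R 1 3 1 3 * n 0 * n 3 ∧
    Zt R n 2 2 = R 0 1 0 2 * n 0 * n 3 + R 0 1 1 2 * n 1 * n 3 + R 0 1 2 3 * n 1 * n 1 - R 0 1 2 3 * n 3 * n 3 - R 0 2 0 3 * n 0 * n 1 - R 0 2 1 3 * n 0 * n 0 - R 0 2 1 3 * n 1 * n 1 + R 0 3 2 3 * n 1 * n 3 - R 1 2 1 3 * n 0 * n 1 + R 1 3 2 3 * n 0 * n 3 ∧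
    Zt R n 2 3 = R 0 1 0 3 * n 0 * n 3 + R 0 1 1 3 * n 1 * n 3 + R 0 1 2 3 * n 2 * n 3 - R 0 3 0 3 * n 0 * n 1 - R 0 3 1 3 * n 0 * n 0 - R 0 3 1 3 * n 1 * n 1 - R 0 3 2 3 * n 1 * n 2 - R 1 3 1 3 * n 0 * n 1 - R 1 3 2 3 * n 0 * n 2 ∧
    Zt R n 3 0 = R 0 1 0 1 * n 1 * n 2 - R 0 1 0 2 * n 1 * n 1 + R 0 1 0 2 * n 2 * n 2 + R 0 1 0 3 * n 2 * n 3 - R 0 1 1 2 * n 0 * n 1 + R 0 1 2 3 * n 0 * n 3 - R 0 2 0 2 * n 1 * n 2 - R 0 2 0 3 * n 1 * n 3 - R 0 2 1 2 * n 0 * n 2 - R 0 2 1 3 * n 0 * n 3 ∧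
    Zt R n 3 1 = -R 0 1 0 1 * n 0 * n 2 + R 0 1 0 2 * n 0 * n 1 + R 0 1 1 2 * n 0 * n 0 + R 0 1 1 2 * n 2 * n 2 + R 0 1 1 3 * n 2 * n 3 - R 0 2 1 2 * n 1 * n 2 - R 0 2 1 3 * n 1 * n 3 - R 1 2 1 2 * n 0 * n 2 - R 1 2 1 3 * n 0 * n 3 ∧
    Zt R n 3 2 = -R 0 1 0 2 * n 0 * n 2 - R 0 1 1 2 * n 1 * n 2 + R 0 1 2 3 * n 2 * n 3 + R 0 2 0 2 * n 0 * n 1 + R 0 2 1 2 * n 0 * n 0 + R 0 2 1 2 * n 1 * n 1 - R 0 2 2 3 * n 1 * n 3 + R 1 2 1 2 * n 0 * n 1 - R 1 2 2 3 * n 0 * n 3 ∧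
    Zt R n 3 3 = -R 0 1 0 3 * n 0 * n 2 - R 0 1 1 3 * n 1 * n 2 - R 0 1 2 3 * n 0 * n 0 - R 0 1 2 3 * n 2 * n 2 + R 0 2 0 3 * n 0 * n 1 + R 0 2 1 3 * n 0 * n 0 + R 0 2 1 3 * n 1 * n 1 + R 0 2 2 3 * n 1 * n 2 + R 1 2 1 3 * n 0 * n 1 + R 1 2 2 3 * n 0 * n 2 := by
  obtain ⟨⟨hz1, hz2⟩, hb⟩ := riem_norm R hR
  have h1 := hR.antisymm₁
  have h2 := hR.antisymm₂
  have hp := hR.pairSymm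
  refine ⟨?_, ?_, ?_, ?_, ?_, ?_, ?_, ?_, ?_, ?_, ?_, ?_, ?_, ?_, ?_, ?_⟩ <;>
  simp [Zt, dualL_eq R h1, eta, sign_two, sign_three, Fin.sum_univ_four, hz1, hz2, hb, h1 1 0, h1 2 0, h1 3 0, h1 2 1, h1 3 1, h1 3 2,
    h2 _ _ 1 0, h2 _ _ 2 0, h2 _ _ 3 0, h2 _ _ 2 1, h2 _ _ 3 1, h2 _ _ 3 2,
    hp 0 2 0 1, hp 0 3 0 1, hp 1 2 0 1, hp 1 3 0 1, hp 2 3 0 1, hp 0 3 0 2, hp 1 2 0 2,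
    hp 1 3 0 2, hp 2 3 0 2, hp 1 2 0 3, hp 1 3 0 3, hp 2 3 0 3, hp 1 3 1 2, hp 2 3 1 2, hp 2 3 1 3] <;> ring

set_option maxHeartbeats 4000000 in
theorem Xt_table (R : Tensor4) (hR : RiemannSymm R) (n : Fin 4 → ℝ) :
    Xt R n 0 0 = R 1 2 1 2 * n 3 * n 3 - 2 * R 1 2 1 3 * n 2 * n 3 + 2 * R 1 2 2 3 * n 1 * n 3 + R 1 3 1 3 * n 2 * n 2 - 2 * R 1 3 2 3 * n 1 * n 2 + R 2 3 2 3 * n 1 * n 1 ∧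
    Xt R n 0 1 = R 0 1 2 3 * n 2 * n 3 + R 0 2 1 2 * n 3 * n 3 - 2 * R 0 2 1 3 * n 2 * n 3 + R 0 2 2 3 * n 1 * n 3 + R 0 3 1 3 * n 2 * n 2 - R 0 3 2 3 * n 1 * n 2 - R 1 2 2 3 * n 0 * n 3 + R 1 3 2 3 * n 0 * n 2 - R 2 3 2 3 * n 0 * n 1 ∧
    Xt R n 0 2 = -R 0 1 1 2 * n 3 * n 3 + R 0 1 1 3 * n 2 * n 3 - 2 * R 0 1 2 3 * n 1 * n 3 + R 0 2 1 3 * n 1 * n 3 - R 0 3 1 3 * n 1 * n 2 + R 0 3 2 3 * n 1 * n 1 + R 1 2 1 3 * n 0 * n 3 - R 1 3 1 3 * n 0 * n 2 + R 1 3 2 3 * n 0 * n 1 ∧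
    Xt R n 0 3 = R 0 1 1 2 * n 2 * n 3 - R 0 1 1 3 * n 2 * n 2 + R 0 1 2 3 * n 1 * n 2 - R 0 2 1 2 * n 1 * n 3 + R 0 2 1 3 * n 1 * n 2 - R 0 2 2 3 * n 1 * n 1 - R 1 2 1 2 * n 0 * n 3 + R 1 2 1 3 * n 0 * n 2 - R 1 2 2 3 * n 0 * n 1 ∧
    Xt R n 1 0 = R 0 1 2 3 * n 2 * n 3 + R 0 2 1 2 * n 3 * n 3 - 2 * R 0 2 1 3 * n 2 * n 3 + R 0 2 2 3 * n 1 * n 3 + R 0 3 1 3 * n 2 * n 2 - R 0 3 2 3 * n 1 * n 2 - R 1 2 2 3 * n 0 * n 3 + R 1 3 2 3 * n 0 * n 2 - R 2 3 2 3 * n 0 * n 1 ∧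
    Xt R n 1 1 = R 0 2 0 2 * n 3 * n 3 - 2 * R 0 2 0 3 * n 2 * n 3 - 2 * R 0 2 2 3 * n 0 * n 3 + R 0 3 0 3 * n 2 * n 2 + 2 * R 0 3 2 3 * n 0 * n 2 + R 2 3 2 3 * n 0 * n 0 ∧
    Xt R n 1 2 = -R 0 1 0 2 * n 3 * n 3 + R 0 1 0 3 * n 2 * n 3 + R 0 1 2 3 * n 0 * n 3 + R 0 2 0 3 * n 1 * n 3 + R 0 2 1 3 * n 0 * n 3 - R 0 3 0 3 * n 1 * n 2 - R 0 3 1 3 * n 0 * n 2 - R 0 3 2 3 * n 0 * n 1 - R 1 3 2 3 * n 0 * n 0 ∧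
    Xt R n 1 3 = R 0 1 0 2 * n 2 * n 3 - R 0 1 0 3 * n 2 * n 2 - 2 * R 0 1 2 3 * n 0 * n 2 - R 0 2 0 2 * n 1 * n 3 + R 0 2 0 3 * n 1 * n 2 - R 0 2 1 2 * n 0 * n 3 + R 0 2 1 3 * n 0 * n 2 + R 0 2 2 3 * n 0 * n 1 + R 1 2 2 3 * n 0 * n 0 ∧
    Xt R n 2 0 = -R 0 1 1 2 * n 3 * n 3 + R 0 1 1 3 * n 2 * n 3 - 2 * R 0 1 2 3 * n 1 * n 3 + R 0 2 1 3 * n 1 * n 3 - R 0 3 1 3 * n 1 * n 2 + R 0 3 2 3 * n 1 * n 1 + R 1 2 1 3 * n 0 * n 3 - R 1 3 1 3 * n 0 * n 2 + R 1 3 2 3 * n 0 * n 1 ∧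
    Xt R n 2 1 = -R 0 1 0 2 * n 3 * n 3 + R 0 1 0 3 * n 2 * n 3 + R 0 1 2 3 * n 0 * n 3 + R 0 2 0 3 * n 1 * n 3 + R 0 2 1 3 * n 0 * n 3 - R 0 3 0 3 * n 1 * n 2 - R 0 3 1 3 * n 0 * n 2 - R 0 3 2 3 * n 0 * n 1 - R 1 3 2 3 * n 0 * n 0 ∧
    Xt R n 2 2 = R 0 1 0 1 * n 3 * n 3 - 2 * R 0 1 0 3 * n 1 * n 3 - 2 * R 0 1 1 3 * n 0 * n 3 + R 0 3 0 3 * n 1 * n 1 + 2 * R 0 3 1 3 * n 0 * n 1 + R 1 3 1 3 * n 0 * n 0 ∧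
    Xt R n 2 3 = -R 0 1 0 1 * n 2 * n 3 + R 0 1 0 2 * n 1 * n 3 + R 0 1 0 3 * n 1 * n 2 + R 0 1 1 2 * n 0 * n 3 + R 0 1 1 3 * n 0 * n 2 + R 0 1 2 3 * n 0 * n 1 - R 0 2 0 3 * n 1 * n 1 - 2 * R 0 2 1 3 * n 0 * n 1 - R 1 2 1 3 * n 0 * n 0 ∧
    Xt R n 3 0 = R 0 1 1 2 * n 2 * n 3 - R 0 1 1 3 * n 2 * n 2 + R 0 1 2 3 * n 1 * n 2 - R 0 2 1 2 * n 1 * n 3 + R 0 2 1 3 * n 1 * n 2 - R 0 2 2 3 * n 1 * n 1 - R 1 2 1 2 * n 0 * n 3 + R 1 2 1 3 * n 0 * n 2 - R 1 2 2 3 * n 0 * n 1 ∧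
    Xt R n 3 1 = R 0 1 0 2 * n 2 * n 3 - R 0 1 0 3 * n 2 * n 2 - 2 * R 0 1 2 3 * n 0 * n 2 - R 0 2 0 2 * n 1 * n 3 + R 0 2 0 3 * n 1 * n 2 - R 0 2 1 2 * n 0 * n 3 + R 0 2 1 3 * n 0 * n 2 + R 0 2 2 3 * n 0 * n 1 + R 1 2 2 3 * n 0 * n 0 ∧
    Xt R n 3 2 = -R 0 1 0 1 * n 2 * n 3 + R 0 1 0 2 * n 1 * n 3 + R 0 1 0 3 * n 1 * n 2 + R 0 1 1 2 * n 0 * n 3 + R 0 1 1 3 * n 0 * n 2 + R 0 1 2 3 * n 0 * n 1 - R 0 2 0 3 * n 1 * n 1 - 2 * R 0 2 1 3 * n 0 * n 1 - R 1 2 1 3 * n 0 * n 0 ∧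
    Xt R n 3 3 = R 0 1 0 1 * n 2 * n 2 - 2 * R 0 1 0 2 * n 1 * n 2 - 2 * R 0 1 1 2 * n 0 * n 2 + R 0 2 0 2 * n 1 * n 1 + 2 * R 0 2 1 2 * n 0 * n 1 + R 1 2 1 2 * n 0 * n 0 := by
  obtain ⟨⟨hz1, hz2⟩, hb⟩ := riem_norm R hR
  have h1 := hR.antisymm₁
  have h2 := hR.antisymm₂
  have hp := hR.pairSymm
  refine ⟨?_, ?_, ?_, ?_, ?_, ?_, ?_, ?_, ?_, ?_, ?_, ?_, ?_, ?_, ?_, ?_⟩ <;>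
  simp [Xt, dualLR_eq R hR, dualR_eq R h2, eta, sign_two, sign_three, Fin.sum_univ_four, hz1, hz2, hb, h1 1 0, h1 2 0, h1 3 0, h1 2 1, h1 3 1, h1 3 2,
    h2 _ _ 1 0, h2 _ _ 2 0, h2 _ _ 3 0, h2 _ _ 2 1, h2 _ _ 3 1, h2 _ _ 3 2,
    hp 0 2 0 1, hp 0 3 0 1, hp 1 2 0 1, hp 1 3 0 1, hp 2 3 0 1, hp 0 3 0 2, hp 1 2 0 2,
    hp 1 3 0 2, hp 2 3 0 2, hp 1 2 0 3, hp 1 3 0 3, hp 2 3 0 3, hp 1 3 1 2, hp 2 3 1 2, hp 2 3 1 3] <;> ring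

/-- The right-hand side of the splitting. -/
def splitRHS (R : Tensor4) (n : Fin 4 → ℝ) (a b c d : Fin 4) : ℝ :=
        lo n c * (lo n a * Yt R n b d - lo n b * Yt R n a d)
        + (hm n a d * Xt R n c b - hm n a c * Xt R n d b)
        + lo n d * (lo n b * Yt R n a c - lo n a * Yt R n b c)
        + (∑ e, ∑ f, (lo n d * gm e f * Zt R n f c - lo n c * gm e f * Zt R n f d)
            * eps n a b e)
        + (∑ e, ∑ f, (lo n b * gm e f * Zt R n f a - lo n a * gm e f * Zt R n f b)
            * eps n c d e)
        + hm n b d * (hm n a c * (∑ e, ∑ f, gm e f * Xt R n e f) - Xt R n a c)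
        + hm n b c * (Xt R n a d - hm n a d * (∑ e, ∑ f, gm e f * Xt R n e f))

theorem Xt_symm (R : Tensor4) (hR : RiemannSymm R) (n : Fin 4 → ℝ) (a c : Fin 4) :
    Xt R n a c = Xt R n c a := by
  obtain ⟨h00, h01, h02, h03, h10, h11, h12, h13, h20, h21, h22, h23, h30, h31, h32, h33⟩ :=
    Xt_table R hR n
  fin_cases a <;> fin_cases c <;>
    simp only [Fin.zero_eta, Fin.mk_one, Fin.reduceFinMk, h01, h02, h03, h10, h12, h13, h20, h21,
      h23, h30, h31, h32]

theorem Yt_symm (R : Tensor4) (hR : RiemannSymm R) (n : Fin 4 → ℝ) (a c : Fin 4) :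
    Yt R n a c = Yt R n c a := by
  unfold Yt
  rw [Finset.sum_comm]
  refine Finset.sum_congr rfl fun b _ => Finset.sum_congr rfl fun d _ => ?_
  rw [hR.pairSymm]
  ring

theorem hm_symm (n : Fin 4 → ℝ) (a b : Fin 4) : hm n a b = hm n b a := by
  have : gm a b = gm b a := by
    by_cases h : a = b
    · rw [h]
    · simp [gm, h, Ne.symm h]
  simp only [hm, this]
  ring

theorem eps_swap (n : Fin 4 → ℝ) (a b c : Fin 4) : eps n b a c = - eps n a b c := by
  have h : ∀ d, eta d b a c = - eta d a b c := by
    intro d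
    unfold eta
    norm_cast
    revert a b c d
    decide
  simp only [eps, h, mul_neg, Finset.sum_neg_distrib]

theorem splitRHS_swap (R : Tensor4) (hR : RiemannSymm R) (n : Fin 4 → ℝ) (a b c d : Fin 4) :
    splitRHS R n a b c d = - splitRHS R n b a c d := by
  unfold splitRHS
  simp only [eps_swap n a b, Fin.sum_univ_four]
  rw [Xt_symm R hR n b d, Xt_symm R hR n d a, Xt_symm R hR n c b, Xt_symm R hR n c a]
  ring

theorem splitRHS_pair (R : Tensor4) (hR : RiemannSymm R) (n : Fin 4 → ℝ) (a b c d : Fin 4) :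
    splitRHS R n a b c d = splitRHS R n c d a b := by
  unfold splitRHS
  simp only [Fin.sum_univ_four]
  rw [Xt_symm R hR n d b, Xt_symm R hR n c a, Xt_symm R hR n a d, Xt_symm R hR n c b,
    Yt_symm R hR n d b, Yt_symm R hR n c a, Yt_symm R hR n d a, Yt_symm R hR n c b,
    hm_symm n c b, hm_symm n c a, hm_symm n d b, hm_symm n d a]
  ring

/-- The equality on all components follows from the one on the 21 ordered pairs of bivectors. -/
theorem tensor_ext (R S : Tensor4) (h1 : ∀ a b c d, R a b c d = - R b a c d)
    (hp : ∀ a b c d, R a b c d = R c d a b) (k1 : ∀ a b c d, S a b c d = - S b a c d)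
    (kp : ∀ a b c d, S a b c d = S c d a b)
    (h : ∀ a b c d, a < b → c < d → (a < c ∨ a = c ∧ b ≤ d) → R a b c d = S a b c d)
    (a b c d : Fin 4) : R a b c d = S a b c d := by
  have h3 : ∀ a b c d, a < b → c < d → R a b c d = S a b c d := by
    intro a b c d hab hcd
    by_cases hc : a < c ∨ a = c ∧ b ≤ d
    · exact h a b c d hab hcd hc
    · rw [hp, kp]
      exact h c d a b hcd hab (by omega)
  have h2 : ∀ a b c d, a < b → R a b c d = S a b c d := by
    intro a b c d hab
    rcases lt_trichotomy c d with hcd | hcd | hcd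
    · exact h3 a b c d hab hcd
    · subst hcd
      have e1 := h1 c c a b
      have e2 := k1 c c a b
      rw [hp, kp]
      linarith
    · rw [hp, kp, h1, k1, hp, kp, h3 a b d c hab hcd]
  rcases lt_trichotomy a b with hab | hab | hab
  · exact h2 a b c d hab
  · subst hab
    have e1 := h1 a a c d
    have e2 := k1 a a c d
    linarith
  · rw [h1, k1, h2 b a c d hab]

set_option maxHeartbeats 0 in
theorem comp (R : Tensor4) (hR : RiemannSymm R) (n : Fin 4 → ℝ)
    (hn : -(n 0 * n 0) + n 1 * n 1 + n 2 * n 2 + n 3 * n 3 = -1)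
    (a b c d : Fin 4) (hab : a < b) (hcd : c < d) (hac : a < c ∨ a = c ∧ b ≤ d) :
    R a b c d = splitRHS R n a b c d := by
  obtain ⟨x00, x01, x02, x03, x10, x11, x12, x13, x20, x21, x22, x23, x30, x31, x32, x33⟩ := Xt_table R hR n
  obtain ⟨y00, y01, y02, y03, y10, y11, y12, y13, y20, y21, y22, y23, y30, y31, y32, y33⟩ := Yt_table R hR n
  obtain ⟨z00, z01, z02, z03, z10, z11, z12, z13, z20, z21, z22, z23, z30, z31, z32, z33⟩ := Zt_table R hR n
  have hb := (riem_norm R hR).2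
  have key : R a b c d - splitRHS R n a b c d =
      (-(n 0 * n 0) + n 1 * n 1 + n 2 * n 2 + n 3 * n 3 + 1) *
      (R a b c d - (gm a d * Xt R n c b - gm a c * Xt R n d b
        + gm b d * (gm a c * (-Xt R n 0 0 + Xt R n 1 1 + Xt R n 2 2 + Xt R n 3 3) - Xt R n a c)
        + gm b c * (Xt R n a d - gm a d * (-Xt R n 0 0 + Xt R n 1 1 + Xt R n 2 2 + Xt R n 3 3)))
        - (-(n 0 * n 0) + n 1 * n 1 + n 2 * n 2 + n 3 * n 3) * R a b c d) := by
    clear hn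
    fin_cases a <;> fin_cases b <;> try (exfalso; revert hab; decide)
    all_goals fin_cases c <;> fin_cases d <;>
      first | (exfalso; revert hcd; decide) | (exfalso; revert hac; decide) | skip
    all_goals
      clear hab hcd hac
      simp [splitRHS, lo_eq, hm, gm, eps, eta, sign_two, sign_three, Fin.sum_univ_four, hb, x00, x01, x02, x03, x10, x11, x12, x13, x20, x21, x22, x23, x30, x31, x32, x33, y00, y01, y02, y03, y10, y11, y12, y13, y20, y21, y22, y23, y30, y31, y32, y33, z00, z01, z02, z03, z10, z11, z12, z13, z20, z21, z22, z23, z30, z31, z32, z33]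
      ring
  rw [hn] at key
  linarith

/-- Orthogonal splitting of the Riemann tensor with respect to a unit timelike `n^a`. -/
theorem riemann_orthogonal_splitting
    (R : Tensor4) (hR : RiemannSymm R)
    (n : Fin 4 → ℝ) (hn : (∑ a, ∑ b, gm a b * n a * n b) = -1) :
    ∀ a b c d : Fin 4,
      R a b c d =
        lo n c * (lo n a * Yt R n b d - lo n b * Yt R n a d)
        + (hm n a d * Xt R n c b - hm n a c * Xt R n d b)
        + lo n d * (lo n b * Yt R n a c - lo n a * Yt R n b c)
        + (∑ e, ∑ f, (lo n d * gm e f * Zt R n f c - lo n c * gm e f * Zt R n f d)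
            * eps n a b e)
        + (∑ e, ∑ f, (lo n b * gm e f * Zt R n f a - lo n a * gm e f * Zt R n f b)
            * eps n c d e)
        + hm n b d * (hm n a c * (∑ e, ∑ f, gm e f * Xt R n e f) - Xt R n a c)
        + hm n b c * (Xt R n a d - hm n a d * (∑ e, ∑ f, gm e f * Xt R n e f)) := by
  have hn' : -(n 0 * n 0) + n 1 * n 1 + n 2 * n 2 + n 3 * n 3 = -1 := by
    simp [Fin.sum_univ_four, gm] at hn
    linarith
  exact tensor_ext R (splitRHS R n) hR.antisymm₁ hR.pairSymm (splitRHS_swap R hR n)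
    (splitRHS_pair R hR n) (comp R hR n hn')
end
end

section
/- Let R_{abcd} have Riemann symmetries on Minkowski space. Then the two expressions for the Bel tensor agree: ½ (R*_{apcq} R*_b{}^p{}_d{}^q + *R_{apcq} *R_b{}^p{}_d{}^q + *R*_{apcq} *R*_b{}^p{}_d{}^q + R_{apcq} R_b{}^p{}_d{}^q) = R_{aecf} R_b{}^e{}_d{}^f − ½ g_{cd} R_{aefp} R_b{}^{efp} − ½ g_{ab} R_{cefp} R_d{}^{efp} + R_b{}^e{}_c{}^f R_{dfae} + ⅛ g_{ab} g_{cd} R_{efph} R^{efph}. -/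
noncomputable section

/-- Double contraction `A_{apcq} B_b{}^p{}_d{}^q` (indices raised with `gm`). -/
def q2 (A B : Tensor4) (a b c d : Fin 4) : ℝ :=
  ∑ p, ∑ q, ∑ r, ∑ s, A a p c q * gm p r * gm q s * B b r d s

/-- Triple contraction `A_{aefp} B_b{}^{efp}`. -/
def q3 (A B : Tensor4) (a b : Fin 4) : ℝ :=
  ∑ e, ∑ f, ∑ p, ∑ r, ∑ s, ∑ t, A a e f p * gm e r * gm f s * gm p t * B b r s t

/-- Full contraction `A_{efph} B^{efph}`. -/
def q4 (A B : Tensor4) : ℝ :=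
  ∑ e, ∑ f, ∑ p, ∑ h, ∑ r, ∑ s, ∑ t, ∑ u,
    A e f p h * gm e r * gm f s * gm p t * gm h u * B r s t u

/-- The Bel tensor of `R`:
`B_{abcd} = R_{aecf} R_b{}^e{}_d{}^f − ½ g_{cd} R_{aefp} R_b{}^{efp} − ½ g_{ab} R_{cefp} R_d{}^{efp}`
`+ R_b{}^e{}_c{}^f R_{dfae} + ⅛ g_{ab} g_{cd} R_{efph} R^{efph}`. -/
def Bel (R : Tensor4) (a b c d : Fin 4) : ℝ :=
  q2 R R a b c d
  - (1/2) * gm c d * q3 R R a b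
  - (1/2) * gm a b * q3 R R c d
  + (∑ e, ∑ f, ∑ r, ∑ s, gm e r * gm f s * R b r c s * R d f a e)
  + (1/8) * gm a b * gm c d * q4 R R

/-- Diagonal entries of the metric. -/
def sg (a : Fin 4) : ℝ := if a = 0 then -1 else 1

theorem gm_sum (p : Fin 4) (f : Fin 4 → ℝ) : ∑ r, gm p r * f r = sg p * f p := by
  simp [gm, sg]

/-- Hodge dual of a bivector. -/
def hd (A : Fin 4 → Fin 4 → ℝ) (a b : Fin 4) : ℝ :=
  (1/2) * ∑ p, ∑ q, eta a b p q * (∑ r, ∑ s, gm p r * gm q s * A r s)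

theorem hd_eq (A : Fin 4 → Fin 4 → ℝ) (a b : Fin 4) :
    hd A a b = (1/2) * ∑ p, ∑ q, eta a b p q * (sg p * sg q * A p q) := by
  simp only [hd, mul_assoc, ← Finset.mul_sum, gm_sum]

theorem hd_contract (A B : Fin 4 → Fin 4 → ℝ) (hA : ∀ x y, A x y = - A y x)
    (hB : ∀ x y, B x y = - B y x) (a b : Fin 4) :
    ∑ p, sg p * (hd A a p * hd B b p)
      = ∑ p, sg p * (A b p * B a p)
        - (1/2) * gm a b * ∑ p, ∑ q, sg p * (sg q * (A p q * B p q)) := by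
  have z : ∀ C : Fin 4 → Fin 4 → ℝ, (∀ x y, C x y = - C y x) → ∀ x, C x x = 0 := by
    intro C hC x
    have := hC x x
    linarith
  have s2 : Int.sign 2 = 1 := by decide
  have s3 : Int.sign 3 = 1 := by decide
  simp only [hd_eq, Fin.sum_univ_four]
  fin_cases a <;> fin_cases b <;>
    simp [eta, sg, gm, s2, s3, z A hA, z B hB, hA 1 0, hA 2 0, hA 3 0, hA 2 1, hA 3 1, hA 3 2,
      hB 1 0, hB 2 0, hB 3 0, hB 2 1, hB 3 1, hB 3 2] <;> ring

theorem eta_pair (a b c d : Fin 4) : eta a b c d = eta c d a b := by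
  simp only [eta]
  norm_cast
  revert a b c d
  decide

theorem dualL_hd (R : Tensor4) (a b c d : Fin 4) :
    dualL R a b c d = hd (fun x y => R x y c d) a b := rfl

theorem dualR_hd (R : Tensor4) (a b c d : Fin 4) :
    dualR R a b c d = hd (fun x y => R a b x y) c d := by
  simp only [dualR, hd, eta_pair c d]

theorem q2_eq (A B : Tensor4) (a b c d : Fin 4) :
    q2 A B a b c d = ∑ p, ∑ q, sg p * (sg q * (A a p c q * B b p d q)) := by
  have h : ∀ p q r s : Fin 4, A a p c q * gm p r * gm q s * B b r d s
      = gm p r * (gm q s * (A a p c q * B b r d s)) := by intros; ring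
  simp only [q2, h, ← Finset.mul_sum, gm_sum]

theorem q3_eq (A B : Tensor4) (a b : Fin 4) :
    q3 A B a b = ∑ p, ∑ q, ∑ r, sg p * (sg q * (sg r * (A a p q r * B b p q r))) := by
  have h : ∀ e f p r s t : Fin 4, A a e f p * gm e r * gm f s * gm p t * B b r s t
      = gm e r * (gm f s * (gm p t * (A a e f p * B b r s t))) := by intros; ring
  simp only [q3, h, ← Finset.mul_sum, gm_sum]

theorem q4_eq (A B : Tensor4) :
    q4 A B = ∑ p, ∑ q, ∑ r, ∑ s,
      sg p * (sg q * (sg r * (sg s * (A p q r s * B p q r s)))) := by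
  have h : ∀ e f p h r s t u : Fin 4,
      A e f p h * gm e r * gm f s * gm p t * gm h u * B r s t u
      = gm e r * (gm f s * (gm p t * (gm h u * (A e f p h * B r s t u)))) := by intros; ring
  simp only [q4, h, ← Finset.mul_sum, gm_sum]

/-- Contraction over the first pair and the last index. -/
def t3 (A : Tensor4) (c d : Fin 4) : ℝ :=
  ∑ q, ∑ x, ∑ y, sg q * (sg x * (sg y * (A x y c q * A x y d q)))

theorem q2_dualL (S : Tensor4) (h : ∀ a b c d, S a b c d = - S b a c d) (a b c d : Fin 4) :
    q2 (dualL S) (dualL S) a b c d = q2 S S b a c d - (1/2) * gm a b * t3 S c d := by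
  rw [q2_eq, q2_eq, Finset.sum_comm,
    Finset.sum_comm (f := fun p q => sg p * (sg q * (S b p c q * S a p d q)))]
  simp only [t3, Finset.mul_sum]
  rw [← Finset.sum_sub_distrib]
  refine Finset.sum_congr rfl fun q _ => ?_
  have := congrArg (fun z => sg q * z) (hd_contract (fun x y => S x y c q) (fun x y => S x y d q)
    (fun x y => h x y c q) (fun x y => h x y d q) a b)
  simp only [mul_sub, Finset.mul_sum] at this
  simp only [dualL_hd]
  refine Eq.trans (Finset.sum_congr rfl fun p _ => ?_) (this.trans
    (congrArg₂ (· - ·) (Finset.sum_congr rfl fun p _ => ?_)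
      (Finset.sum_congr rfl fun p _ => Finset.sum_congr rfl fun r _ => ?_))) <;> ring

theorem q2_dualR (S : Tensor4) (h : ∀ a b c d, S a b c d = - S a b d c) (a b c d : Fin 4) :
    q2 (dualR S) (dualR S) a b c d = q2 S S a b d c - (1/2) * gm c d * q3 S S a b := by
  rw [q2_eq, q2_eq, q3_eq]
  simp only [Finset.mul_sum]
  rw [← Finset.sum_sub_distrib]
  refine Finset.sum_congr rfl fun p _ => ?_
  have := congrArg (fun z => sg p * z) (hd_contract (fun x y => S a p x y) (fun x y => S b p x y)
    (fun x y => h a p x y) (fun x y => h b p x y) c d)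
  simp only [mul_sub, Finset.mul_sum] at this
  simp only [dualR_hd]
  rw [this]
  congr 1
  refine Finset.sum_congr rfl fun p _ => Finset.sum_congr rfl fun r _ => ?_
  ring

theorem t3_eq (S : Tensor4) (c d : Fin 4) :
    t3 S c d = ∑ x, ∑ y, sg x * (sg y * ∑ q, sg q * (S x y c q * S x y d q)) := by
  rw [t3, Finset.sum_comm]
  refine Finset.sum_congr rfl fun x _ => ?_
  rw [Finset.sum_comm]
  refine Finset.sum_congr rfl fun y _ => ?_
  simp only [Finset.mul_sum]
  refine Finset.sum_congr rfl fun q _ => ?_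
  ring

theorem t3_dualR (S : Tensor4) (h : ∀ a b c d, S a b c d = - S a b d c) (c d : Fin 4) :
    t3 (dualR S) c d = t3 S d c - (1/2) * gm c d * q4 S S := by
  rw [t3_eq, t3_eq, q4_eq]
  simp only [Finset.mul_sum (a := (1/2) * gm c d)]
  rw [← Finset.sum_sub_distrib]
  refine Finset.sum_congr rfl fun x _ => ?_
  rw [← Finset.sum_sub_distrib]
  refine Finset.sum_congr rfl fun y _ => ?_
  simp only [dualR_hd]
  rw [hd_contract _ _ (fun u v => h x y u v) (fun u v => h x y u v)]
  simp only [← Finset.mul_sum]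
  ring

theorem t3_q3 (R : Tensor4) (hR : RiemannSymm R) (c d : Fin 4) : t3 R c d = q3 R R c d := by
  rw [t3, q3_eq]
  refine Finset.sum_congr rfl fun q _ => Finset.sum_congr rfl fun x _ =>
    Finset.sum_congr rfl fun y _ => ?_
  rw [hR.pairSymm x y c q, hR.pairSymm x y d q]

theorem q3_comm (R : Tensor4) (c d : Fin 4) : q3 R R c d = q3 R R d c := by
  simp only [q3_eq, mul_comm (R c _ _ _)]

theorem q2_comm (R : Tensor4) (a b c d : Fin 4) : q2 R R a b c d = q2 R R b a d c := by
  simp only [q2_eq, mul_comm (R a _ _ _)]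

theorem bel_cross (R : Tensor4) (hR : RiemannSymm R) (a b c d : Fin 4) :
    (∑ e, ∑ f, ∑ r, ∑ s, gm e r * gm f s * R b r c s * R d f a e) = q2 R R a b d c := by
  simp only [q2_eq, mul_assoc, ← Finset.mul_sum, gm_sum]
  refine Finset.sum_congr rfl fun p _ => congrArg _ (Finset.sum_congr rfl fun q _ => ?_)
  rw [hR.pairSymm d q a p]
  ring

/-- The two expressions for the Bel tensor agree:
`½ (R*_{apcq} R*_b{}^p{}_d{}^q + *R_{apcq} *R_b{}^p{}_d{}^q + *R*_{apcq} *R*_b{}^p{}_d{}^q`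
`+ R_{apcq} R_b{}^p{}_d{}^q)` equals the expanded form `Bel R`. -/
theorem bel_tensor_two_expressions
    (R : Tensor4) (hR : RiemannSymm R) :
    ∀ a b c d : Fin 4,
      (1/2) * (q2 (dualR R) (dualR R) a b c d + q2 (dualL R) (dualL R) a b c d
        + q2 (dualLR R) (dualLR R) a b c d + q2 R R a b c d)
      = Bel R a b c d := by
  intro a b c d
  have hdR : ∀ a b c d, dualR R a b c d = - dualR R b a c d := by
    intro a b c d
    have h : (fun x y => R a b x y) = fun x y => - R b a x y := by
      funext x y
      exact hR.antisymm₁ a b x y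
    rw [dualR_hd, dualR_hd, h]
    simp [hd]
  rw [dualLR, q2_dualR R hR.antisymm₂, q2_dualL R hR.antisymm₁, q2_dualL _ hdR,
    q2_dualR R hR.antisymm₂, t3_dualR R hR.antisymm₂, t3_q3 R hR, t3_q3 R hR, Bel, bel_cross R hR,
    q3_comm R d c, q3_comm R b a, q2_comm R b a d c, q2_comm R b a c d]
  ring
end
end

section
/- Let R_{abcd} have Riemann symmetries on Minkowski space and let B_{abcd} be its Bel tensor. Then the following three conditions are equivalent: (i) B_{abcd} = 0; (ii) R_{abcd} = 0; (iii) there exists a timelike vector u^a such that B_{abcd} u^a u^b u^c u^d = 0. -/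
noncomputable section

/-- Full contraction of `R ⊗ R` using four bilinear forms. -/
def belT (R : Tensor4) (P1 P2 P3 P4 : Fin 4 → Fin 4 → ℝ) : ℝ :=
  ∑ x : (Fin 4 × Fin 4) × (Fin 4 × Fin 4), ∑ y : (Fin 4 × Fin 4) × (Fin 4 × Fin 4),
    R x.1.1 x.1.2 x.2.1 x.2.2 * P1 x.1.1 y.1.1 * P2 x.1.2 y.1.2 * P3 x.2.1 y.2.1 * P4 x.2.2 y.2.2
      * R y.1.1 y.1.2 y.2.1 y.2.2

/-- Swapping inside the first pair. -/
lemma belT_swap1 (R : Tensor4) (hR : RiemannSymm R) (P1 P2 P3 P4 : Fin 4 → Fin 4 → ℝ) :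
    belT R P1 P2 P3 P4 = belT R P2 P1 P3 P4 := by
  let E : ((Fin 4 × Fin 4) × (Fin 4 × Fin 4)) ≃ ((Fin 4 × Fin 4) × (Fin 4 × Fin 4)) :=
    Equiv.prodCongr (Equiv.prodComm _ _) (Equiv.refl _)
  unfold belT
  refine Fintype.sum_equiv E _ _ fun x => Fintype.sum_equiv E _ _ fun y => ?_
  simp only [E, Equiv.prodCongr_apply, Prod.map_fst, Prod.map_snd, Equiv.prodComm_apply,
    Prod.fst_swap, Prod.snd_swap, Equiv.refl_apply]
  rw [hR.antisymm₁ x.1.1, hR.antisymm₁ y.1.1]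
  ring

/-- Swapping the pairs. -/
lemma belT_pair (R : Tensor4) (hR : RiemannSymm R) (P1 P2 P3 P4 : Fin 4 → Fin 4 → ℝ) :
    belT R P1 P2 P3 P4 = belT R P3 P4 P1 P2 := by
  let E : ((Fin 4 × Fin 4) × (Fin 4 × Fin 4)) ≃ ((Fin 4 × Fin 4) × (Fin 4 × Fin 4)) :=
    Equiv.prodComm _ _
  unfold belT
  refine Fintype.sum_equiv E _ _ fun x => Fintype.sum_equiv E _ _ fun y => ?_
  simp only [E, Equiv.prodComm_apply, Prod.fst_swap, Prod.snd_swap]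
  rw [hR.pairSymm x.1.1, hR.pairSymm y.1.1]
  ring

/-- Two copies of `u u` in the first pair give zero. -/
lemma belT_zero (R : Tensor4) (hR : RiemannSymm R) (u : Fin 4 → ℝ)
    (P3 P4 : Fin 4 → Fin 4 → ℝ) :
    belT R (fun a b => u a * u b) (fun a b => u a * u b) P3 P4 = 0 := by
  let E : ((Fin 4 × Fin 4) × (Fin 4 × Fin 4)) ≃ ((Fin 4 × Fin 4) × (Fin 4 × Fin 4)) :=
    Equiv.prodCongr (Equiv.prodComm _ _) (Equiv.refl _)
  have h : belT R (fun a b => u a * u b) (fun a b => u a * u b) P3 P4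
      = - belT R (fun a b => u a * u b) (fun a b => u a * u b) P3 P4 := by
    conv_rhs => unfold belT
    rw [← Finset.sum_neg_distrib]
    unfold belT
    refine Fintype.sum_equiv E _ _ fun x => ?_
    rw [← Finset.sum_neg_distrib]
    refine Finset.sum_congr rfl fun y _ => ?_
    simp only [E, Equiv.prodCongr_apply, Prod.map_fst, Prod.map_snd, Equiv.prodComm_apply,
      Prod.fst_swap, Prod.snd_swap, Equiv.refl_apply]
    rw [hR.antisymm₁ x.1.1]
    ring
  linarith

/-- Linearity in the first slot. -/
lemma belT_lin (R : Tensor4) (c : ℝ) (G U P2 P3 P4 : Fin 4 → Fin 4 → ℝ) :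
    belT R (fun a b => G a b + c * U a b) P2 P3 P4
      = belT R G P2 P3 P4 + c * belT R U P2 P3 P4 := by
  unfold belT
  simp only [Finset.mul_sum, ← Finset.sum_add_distrib]
  refine Finset.sum_congr rfl fun x _ => Finset.sum_congr rfl fun y _ => ?_
  ring

/-- Expansion of the contraction with `g + c u u`. -/
lemma belT_expand (R : Tensor4) (hR : RiemannSymm R) (u : Fin 4 → ℝ) (c : ℝ)
    (G : Fin 4 → Fin 4 → ℝ) :
    belT R (fun a b => G a b + c * (u a * u b)) (fun a b => G a b + c * (u a * u b))
      (fun a b => G a b + c * (u a * u b)) (fun a b => G a b + c * (u a * u b))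
    = belT R G G G G + 4 * c * belT R (fun a b => u a * u b) G G G
      + 4 * c ^ 2 * belT R (fun a b => u a * u b) G (fun a b => u a * u b) G := by
  have lin := belT_lin R c G (fun a b => u a * u b)
  have sw := belT_swap1 R hR
  have pr := belT_pair R hR
  have key : ∀ P3 P4, belT R (fun a b => G a b + c * (u a * u b))
      (fun a b => G a b + c * (u a * u b)) P3 P4
      = belT R G G P3 P4 + 2 * c * belT R (fun a b => u a * u b) G P3 P4 := by
    intro P3 P4
    have h1 := lin (fun a b => G a b + c * (u a * u b)) P3 P4
    have h2 := sw G (fun a b => G a b + c * (u a * u b)) P3 P4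
    have h3 := lin G P3 P4
    have h4 := sw (fun a b => u a * u b) (fun a b => G a b + c * (u a * u b)) P3 P4
    have h5 := lin (fun a b => u a * u b) P3 P4
    have h6 := belT_zero R hR u P3 P4
    have h7 := sw G (fun a b => u a * u b) P3 P4
    rw [h1, h2, h3, h4, h5, h6, h7]
    ring
  rw [key, pr G, key, pr (fun a b => u a * u b) G (fun a b => G a b + c * (u a * u b)), key,
    pr G G (fun a b => u a * u b) G]
  ring

/-- Collapsing an eightfold sum. -/
lemma sum8 (F : Fin 4 → Fin 4 → Fin 4 → Fin 4 → Fin 4 → Fin 4 → Fin 4 → Fin 4 → ℝ) :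
    (∑ a, ∑ b, ∑ c, ∑ d, ∑ p, ∑ q, ∑ r, ∑ s, F a b c d p q r s)
    = ∑ z : Fin 4 × Fin 4 × Fin 4 × Fin 4 × Fin 4 × Fin 4 × Fin 4 × Fin 4,
      F z.1 z.2.1 z.2.2.1 z.2.2.2.1 z.2.2.2.2.1 z.2.2.2.2.2.1 z.2.2.2.2.2.2.1 z.2.2.2.2.2.2.2 := by
  simp only [Fintype.sum_prod_type]

/-- The contraction as a single sum. -/
lemma belT_single (R : Tensor4) (P1 P2 P3 P4 : Fin 4 → Fin 4 → ℝ) :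
    belT R P1 P2 P3 P4
    = ∑ z : ((Fin 4 × Fin 4) × (Fin 4 × Fin 4)) × ((Fin 4 × Fin 4) × (Fin 4 × Fin 4)),
      R z.1.1.1 z.1.1.2 z.1.2.1 z.1.2.2 * P1 z.1.1.1 z.2.1.1 * P2 z.1.1.2 z.2.1.2
        * P3 z.1.2.1 z.2.2.1 * P4 z.1.2.2 z.2.2.2 * R z.2.1.1 z.2.1.2 z.2.2.1 z.2.2.2 := by
  rw [Fintype.sum_prod_type]
  rfl

lemma belT_q2 (R : Tensor4) (u : Fin 4 → ℝ) :
    (∑ a, ∑ b, ∑ c, ∑ d, q2 R R a b c d * u a * u b * u c * u d)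
      = belT R (fun a b => u a * u b) gm (fun a b => u a * u b) gm := by
  simp only [q2, Finset.sum_mul]
  rw [sum8, belT_single]
  refine Fintype.sum_equiv
    ⟨fun ⟨a, b, c, d, p, q, r, s⟩ => (((a, p), (c, q)), ((b, r), (d, s))),
     fun ⟨⟨⟨a, p⟩, ⟨c, q⟩⟩, ⟨⟨b, r⟩, ⟨d, s⟩⟩⟩ => (a, b, c, d, p, q, r, s),
     fun _ => rfl, fun _ => rfl⟩ _ _ ?_
  rintro ⟨a, b, c, d, p, q, r, s⟩
  simp only [Equiv.coe_fn_mk]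
  ring

lemma belT_q2b (R : Tensor4) (hR : RiemannSymm R) (u : Fin 4 → ℝ) :
    (∑ a, ∑ b, ∑ c, ∑ d, (∑ e, ∑ f, ∑ r, ∑ s, gm e r * gm f s * R b r c s * R d f a e)
        * u a * u b * u c * u d)
      = belT R (fun a b => u a * u b) gm (fun a b => u a * u b) gm := by
  simp only [Finset.sum_mul]
  rw [sum8, belT_single]
  refine Fintype.sum_equiv
    ⟨fun ⟨a, b, c, d, p, q, r, s⟩ => (((a, p), (d, q)), ((b, r), (c, s))),
     fun ⟨⟨⟨a, p⟩, ⟨d, q⟩⟩, ⟨⟨b, r⟩, ⟨c, s⟩⟩⟩ => (a, b, c, d, p, q, r, s),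
     fun _ => rfl, fun _ => rfl⟩ _ _ ?_
  rintro ⟨a, b, c, d, p, q, r, s⟩
  simp only [Equiv.coe_fn_mk]
  rw [hR.pairSymm d q a p]
  ring

lemma belT_q3 (R : Tensor4) (u : Fin 4 → ℝ) :
    (∑ a, ∑ b, q3 R R a b * u a * u b) = belT R (fun a b => u a * u b) gm gm gm := by
  simp only [q3, Finset.sum_mul]
  rw [sum8, belT_single]
  refine Fintype.sum_equiv
    ⟨fun ⟨a, b, e, f, p, r, s, t⟩ => (((a, e), (f, p)), ((b, r), (s, t))),
     fun ⟨⟨⟨a, e⟩, ⟨f, p⟩⟩, ⟨⟨b, r⟩, ⟨s, t⟩⟩⟩ => (a, b, e, f, p, r, s, t),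
     fun _ => rfl, fun _ => rfl⟩ _ _ ?_
  rintro ⟨a, b, e, f, p, r, s, t⟩
  simp only [Equiv.coe_fn_mk]
  ring

lemma belT_q4 (R : Tensor4) : q4 R R = belT R gm gm gm gm := by
  unfold q4
  rw [sum8, belT_single]
  refine Fintype.sum_equiv
    ⟨fun ⟨a, e, f, p, b, r, s, t⟩ => (((a, e), (f, p)), ((b, r), (s, t))),
     fun ⟨⟨⟨a, e⟩, ⟨f, p⟩⟩, ⟨⟨b, r⟩, ⟨s, t⟩⟩⟩ => (a, e, f, p, b, r, s, t),
     fun _ => rfl, fun _ => rfl⟩ _ _ ?_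
  rintro ⟨a, b, e, f, p, r, s, t⟩
  simp only [Equiv.coe_fn_mk]

/-- Product of two double sums. -/
lemma sum_prod22 (F H : Fin 4 → Fin 4 → ℝ) :
    (∑ a, ∑ b, ∑ c, ∑ d, F a b * H c d) = (∑ a, ∑ b, F a b) * (∑ c, ∑ d, H c d) := by
  simp only [← Finset.mul_sum, Finset.sum_mul]

/-- The fully contracted Bel tensor. -/
lemma belT_bel (R : Tensor4) (hR : RiemannSymm R) (u : Fin 4 → ℝ) :
    (∑ a, ∑ b, ∑ c, ∑ d, Bel R a b c d * u a * u b * u c * u d)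
      = 2 * belT R (fun a b => u a * u b) gm (fun a b => u a * u b) gm
        - (∑ a, ∑ b, gm a b * u a * u b) * belT R (fun a b => u a * u b) gm gm gm
        + (1/8) * (∑ a, ∑ b, gm a b * u a * u b) ^ 2 * belT R gm gm gm gm := by
  have e : ∀ a b c d, Bel R a b c d * u a * u b * u c * u d
      = q2 R R a b c d * u a * u b * u c * u d
      + (∑ e, ∑ f, ∑ r, ∑ s, gm e r * gm f s * R b r c s * R d f a e) * u a * u b * u c * u d
      + (-(1/2) * ((q3 R R a b * u a * u b) * (gm c d * u c * u d))
      + -(1/2) * ((gm a b * u a * u b) * (q3 R R c d * u c * u d))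
      + (1/8) * q4 R R * ((gm a b * u a * u b) * (gm c d * u c * u d))) := by
    intro a b c d
    unfold Bel
    ring
  simp only [e, Finset.sum_add_distrib]
  rw [belT_q2, belT_q2b R hR]
  simp only [← Finset.mul_sum, ← Finset.sum_mul]
  rw [belT_q3, belT_q4]
  ring

set_option maxHeartbeats 2000000 in
/-- The Riemannian metric is positive definite. -/
lemma belM_posDef (u : Fin 4 → ℝ) (hu : (∑ a, ∑ b, gm a b * u a * u b) < 0) :
    (Matrix.of (fun a b => gm a b + (-2 / (∑ a, ∑ b, gm a b * u a * u b)) * (u a * u b))).PosDef := by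
  have hN : (∑ a, ∑ b, gm a b * u a * u b) = -(u 0 ^ 2 - (u 1 ^ 2 + u 2 ^ 2 + u 3 ^ 2)) := by
    simp [Fin.sum_univ_four, gm]
    ring
  rw [hN] at hu ⊢
  refine Matrix.PosDef.of_dotProduct_mulVec_pos ?_ ?_
  · ext a b
    simp only [Matrix.conjTranspose_apply, Matrix.of_apply, star_trivial]
    have : gm b a = gm a b := by
      unfold gm
      by_cases h : a = b
      · subst h; rfl
      · rw [if_neg h, if_neg (Ne.symm h)]
    rw [this]
    ring
  · intro x hx
    set V := u 1 ^ 2 + u 2 ^ 2 + u 3 ^ 2 with hV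
    set X := x 1 ^ 2 + x 2 ^ 2 + x 3 ^ 2 with hX
    set s := u 1 * x 1 + u 2 * x 2 + u 3 * x 3 with hs
    have hpos : 0 < u 0 ^ 2 - V := by linarith
    have hV0 : 0 ≤ V := by positivity
    have hX0 : 0 ≤ X := by positivity
    have hcs : s ^ 2 ≤ V * X := by
      rw [hV, hX, hs]
      nlinarith [sq_nonneg (u 1 * x 2 - u 2 * x 1), sq_nonneg (u 1 * x 3 - u 3 * x 1),
        sq_nonneg (u 2 * x 3 - u 3 * x 2)]
    have hx0 : 0 < x 0 ^ 2 + X := by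
      by_contra hcon
      apply hx
      have h0 : x 0 = 0 := by nlinarith [sq_nonneg (x 0), sq_nonneg (x 1), sq_nonneg (x 2), sq_nonneg (x 3)]
      have h1 : x 1 = 0 := by nlinarith [sq_nonneg (x 0), sq_nonneg (x 1), sq_nonneg (x 2), sq_nonneg (x 3)]
      have h2 : x 2 = 0 := by nlinarith [sq_nonneg (x 0), sq_nonneg (x 1), sq_nonneg (x 2), sq_nonneg (x 3)]
      have h3 : x 3 = 0 := by nlinarith [sq_nonneg (x 0), sq_nonneg (x 1), sq_nonneg (x 2), sq_nonneg (x 3)]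
      ext i
      fin_cases i <;> simp [h0, h1, h2, h3]
    have main : 0 < (u 0 ^ 2 - V) * (X - x 0 ^ 2) + 2 * (u 0 * x 0 + s) ^ 2 := by
      have hA : 0 < u 0 ^ 2 + V := by linarith
      have hid : (u 0 ^ 2 + V) * ((u 0 ^ 2 - V) * (X - x 0 ^ 2) + 2 * (u 0 * x 0 + s) ^ 2)
          = ((u 0 ^ 2 + V) * x 0 + 2 * u 0 * s) ^ 2
            + (u 0 ^ 2 - V) * ((u 0 ^ 2 - V) * X + 2 * (V * X - s ^ 2)) := by ring
      have h2 : 0 ≤ V * X - s ^ 2 := by linarith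
      refine pos_of_mul_pos_right (a := u 0 ^ 2 + V) ?_ hA.le
      rw [hid]
      rcases hX0.eq_or_lt with h | h
      · have hs0 : s = 0 := by
          rw [← h] at hcs
          nlinarith [sq_nonneg s]
        have hx00 : 0 < x 0 ^ 2 := by linarith
        rw [hs0, ← h]
        have : 0 < (u 0 ^ 2 + V) ^ 2 * x 0 ^ 2 := by positivity
        linarith
      · have h3 : 0 < (u 0 ^ 2 - V) * ((u 0 ^ 2 - V) * X + 2 * (V * X - s ^ 2)) := by positivity
        linarith [sq_nonneg ((u 0 ^ 2 + V) * x 0 + 2 * u 0 * s)]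
    have : star x ⬝ᵥ (Matrix.of (fun a b => gm a b + (-2 / -(u 0 ^ 2 - V)) * (u a * u b))).mulVec x
        = ((u 0 ^ 2 - V) * (X - x 0 ^ 2) + 2 * (u 0 * x 0 + s) ^ 2) / (u 0 ^ 2 - V) := by
      rw [neg_div_neg_eq, eq_div_iff hpos.ne']
      generalize u 0 ^ 2 - V = N at *
      simp only [dotProduct, Matrix.mulVec, Fin.sum_univ_four, Matrix.of_apply, Pi.star_apply, star_trivial]
      simp [gm]
      rw [hX, hs]
      field_simp
      ring
    rw [this]
    exact div_pos main hpos

/-- Positive definiteness of the contraction. -/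
lemma belT_pos (R : Tensor4) (m : Matrix (Fin 4) (Fin 4) ℝ) (hm : m.PosDef)
    (h : belT R m m m m = 0) : ∀ a b c d, R a b c d = 0 := by
  have hK := (hm.kronecker hm).kronecker (hm.kronecker hm)
  by_contra hne
  push Not at hne
  obtain ⟨a, b, c, d, hne⟩ := hne
  let v : (Fin 4 × Fin 4) × (Fin 4 × Fin 4) → ℝ := fun x => R x.1.1 x.1.2 x.2.1 x.2.2
  have hv : v ≠ 0 := fun h0 => hne (congrFun h0 ((a, b), (c, d)))
  have := hK.dotProduct_mulVec_pos hv
  refine this.ne' ?_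
  rw [← h]
  simp only [belT, dotProduct, Matrix.mulVec, Finset.mul_sum]
  refine Finset.sum_congr rfl fun x _ => Finset.sum_congr rfl fun y _ => ?_
  simp only [v, Matrix.kroneckerMap_apply, Pi.star_apply, star_trivial]
  ring

/-- The main implication. -/
lemma bel_key (R : Tensor4) (hR : RiemannSymm R) (u : Fin 4 → ℝ)
    (hu : (∑ a, ∑ b, gm a b * u a * u b) < 0)
    (h : (∑ a, ∑ b, ∑ c, ∑ d, Bel R a b c d * u a * u b * u c * u d) = 0) :
    ∀ a b c d, R a b c d = 0 := by
  have hP := belM_posDef u hu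
  rw [belT_bel R hR] at h
  generalize (∑ a, ∑ b, gm a b * u a * u b) = N at *
  refine belT_pos R _ hP ?_
  have := belT_expand R hR u (-2 / N) gm
  refine this.trans ?_
  have hN : N ≠ 0 := hu.ne
  field_simp
  linarith

/-- The Bel tensor vanishes iff the Riemann tensor vanishes, iff its total contraction
with some timelike vector vanishes. -/
theorem bel_tensor_vanishing_characterization
    (R : Tensor4) (hR : RiemannSymm R) :
    ((∀ a b c d, Bel R a b c d = 0) ↔ (∀ a b c d, R a b c d = 0)) ∧
    ((∀ a b c d, R a b c d = 0) ↔
      (∃ u : Fin 4 → ℝ, (∑ a, ∑ b, gm a b * u a * u b) < 0 ∧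
        (∑ a, ∑ b, ∑ c, ∑ d, Bel R a b c d * u a * u b * u c * u d) = 0)) := by
  have h0 : (∑ a, ∑ b, gm a b * (Pi.single 0 1 : Fin 4 → ℝ) a * (Pi.single 0 1 : Fin 4 → ℝ) b) < 0 := by
    simp [Fin.sum_univ_four, gm]
  have h1 : (∀ a b c d, R a b c d = 0) → (∀ a b c d, Bel R a b c d = 0) := by
    intro h a b c d
    simp [Bel, q2, q3, q4, h]
  refine ⟨⟨fun h => bel_key R hR _ h0 (by simp [h]), h1⟩,
    ⟨fun h => ⟨_, h0, by simp [h1 h]⟩, fun ⟨u, hu, h⟩ => bel_key R hR u hu h⟩⟩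
end
end
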